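/- In U = U_q⁺(C₂) the root vectors satisfy the commutation relations: b₂b₁ = q⁻² b₁b₂; b₃b₁ = −q⁻¹⟨1⟩[2]₁⁻¹ b₂² + b₁b₃; b₄b₁ = b₂ + q² b₁b₄; b₃b₂ = q⁻² b₂b₃; b₄b₂ = [2]₁ b₃ + b₂b₄; and b₄b₃ = q⁻² b₃b₄. -/

import Mathlib

noncomputable section

/-- The base field `K = ℚ(q)`, rational functions over `ℚ`. -/
abbrev K : Type := RatFunc ℚ

/-- The indeterminate `q`. -/
def q : K := RatFunc.X

/-- `⟨m⟩ = q^m − q^{−m}`. -/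
def qbra (m : ℕ) : K := q ^ m - q⁻¹ ^ m

/-- `[m]₁ = ⟨m⟩/⟨1⟩`. -/
def qn1 (m : ℕ) : K := qbra m / qbra 1

/-- `[m]₂ = ⟨2m⟩/⟨2⟩`. -/
def qn2 (m : ℕ) : K := qbra (2 * m) / qbra 2

/-- Generators of the free algebra on two letters. -/
def g (i : Fin 2) : FreeAlgebra K (Fin 2) := FreeAlgebra.ι K i

/-- The `q`-Serre relations of type `C₂`. -/
inductive SerreC2 : FreeAlgebra K (Fin 2) → FreeAlgebra K (Fin 2) → Prop
  | rel1 : SerreC2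
      (g 0 ^ 3 * g 1 - qn1 3 • (g 0 ^ 2 * g 1 * g 0) + qn1 3 • (g 0 * g 1 * g 0 ^ 2)
        - g 1 * g 0 ^ 3) 0
  | rel2 : SerreC2
      (g 1 ^ 2 * g 0 - qn2 2 • (g 1 * g 0 * g 1) + g 0 * g 1 ^ 2) 0

/-- `U_q⁺(C₂)`: the free algebra on `e₁, e₂` modulo the `q`-Serre relations. -/
abbrev UC2 : Type := RingQuot SerreC2

/-- The Chevalley generator `e₁`. -/
def e1 : UC2 := RingQuot.mkAlgHom K SerreC2 (g 0)

/-- The Chevalley generator `e₂`. -/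
def e2 : UC2 := RingQuot.mkAlgHom K SerreC2 (g 1)

/-- The root vector `b₁ = e₂`. -/
def b1 : UC2 := e2

/-- The root vector `b₂ = e₁e₂ − q² e₂e₁`. -/
def b2 : UC2 := e1 * e2 - (q ^ 2) • (e2 * e1)

/-- The root vector `b₃ = [2]₁⁻¹ (e₁b₂ − b₂e₁)`. -/
def b3 : UC2 := (qn1 2)⁻¹ • (e1 * b2 - b2 * e1)

/-- The root vector `b₄ = e₁`. -/
def b4 : UC2 := e1

theorem q_pow_four_ne : q ^ 4 ≠ 1 := by
  intro h
  have h2 : (Polynomial.X : Polynomial ℚ) ^ 4 = 1 := by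
    apply RatFunc.algebraMap_injective ℚ
    rw [map_pow, RatFunc.algebraMap_X, map_one]
    exact h
  have h3 := congrArg Polynomial.natDegree h2
  simp at h3

theorem q_ne : q ≠ 0 := RatFunc.X_ne_zero

theorem qsq_sub_ne : q ^ 2 - 1 ≠ 0 := by
  intro h
  apply q_pow_four_ne
  linear_combination (q ^ 2 + 1) * h

theorem qsq_add_ne : q ^ 2 + 1 ≠ 0 := by
  intro h
  apply q_pow_four_ne
  linear_combination (q ^ 2 - 1) * h

theorem qbra_one : qbra 1 = (q ^ 2 - 1) / q := by
  have := q_ne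
  unfold qbra
  field_simp

theorem qn1_two : qn1 2 = (q ^ 2 + 1) / q := by
  have h0 := q_ne
  have h1 := qsq_sub_ne
  rw [qn1, qbra_one, qbra]
  field_simp
  ring

theorem qn1_three : qn1 3 = q ^ 2 + 1 + (q ^ 2)⁻¹ := by
  have h0 := q_ne
  have h1 := qsq_sub_ne
  rw [qn1, qbra_one, qbra]
  field_simp
  ring

theorem qn2_two : qn2 2 = q ^ 2 + (q ^ 2)⁻¹ := by
  have h0 := q_ne
  have h1 := qsq_sub_ne
  have h2 := qsq_add_ne
  have h3 : qbra 2 = (q ^ 2 - 1) * (q ^ 2 + 1) / q ^ 2 := by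
    unfold qbra
    field_simp
    ring
  rw [qn2, h3, qbra, inv_pow]
  field_simp
  ring

theorem serre1 : e1 ^ 3 * e2 - qn1 3 • (e1 ^ 2 * e2 * e1) + qn1 3 • (e1 * e2 * e1 ^ 2)
    - e2 * e1 ^ 3 = 0 := by
  have h := RingQuot.mkAlgHom_rel K SerreC2.rel1
  simp only [map_sub, map_add, map_mul, map_pow, map_smul, map_zero] at h
  exact h

theorem serre2 : e2 ^ 2 * e1 - qn2 2 • (e2 * e1 * e2) + e1 * e2 ^ 2 = 0 := by
  have h := RingQuot.mkAlgHom_rel K SerreC2.rel2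
  simp only [map_sub, map_add, map_mul, map_pow, map_smul, map_zero] at h
  exact h

/-- The commutation relations in an arbitrary algebra. -/
theorem comm_rels {F A : Type*} [Field F] [Ring A] [Algebra F A] (r p t k : F) (a b x y : A)
    (hrp : r * p = 1) (ht : t ≠ 0) (hk : k * t = p - 1)
    (hx : a * b = x + r • (b * a)) (hy : a * x = t • y + x * a)
    (h1 : a ^ 3 * b - (r + 1 + p) • (a ^ 2 * b * a) + (r + 1 + p) • (a * b * a ^ 2)
      - b * a ^ 3 = 0)
    (h2 : b ^ 2 * a - (r + p) • (b * a * b) + a * b ^ 2 = 0) :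
    x * b = p • (b * x) ∧ y * b = k • x ^ 2 + b * y ∧ y * x = p • (x * y) ∧
      a * y = p • (y * a) := by
  have hx' : x = a * b - r • (b * a) := by rw [hx]; abel
  have hy' : t • y = a * x - x * a := by rw [hy]; abel
  have inj : ∀ u v : A, t • u = t • v → u = v := fun u v h => smul_right_injective A ht h
  have A1 : x * b = p • (b * x) := by
    rw [hx']
    simp only [mul_sub, sub_mul, smul_sub, mul_smul_comm, smul_mul_assoc, smul_smul, pow_succ,
      pow_zero, one_mul, mul_assoc] at h2 ⊢
    rw [mul_comm p r, hrp]
    refine sub_eq_zero.mp (Eq.trans ?_ h2)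
    module
  have A4 : a * y = p • (y * a) := by
    apply inj
    rw [← mul_smul_comm, smul_comm t p, ← smul_mul_assoc, hy', hx']
    simp only [mul_sub, sub_mul, smul_sub, mul_smul_comm, smul_mul_assoc, smul_smul, pow_succ,
      pow_zero, one_mul, mul_assoc] at h1 ⊢
    rw [mul_comm p r, hrp]
    refine sub_eq_zero.mp (Eq.trans ?_ h1)
    module
  have A2 : y * b = k • x ^ 2 + b * y := by
    apply inj
    rw [smul_add, smul_smul, mul_comm t k, hk, ← mul_smul_comm t b y, ← smul_mul_assoc t y b, hy']
    have e1 : a * x * b = p • (x * x) + b * a * x := by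
      rw [mul_assoc, A1, mul_smul_comm, ← mul_assoc, hx, add_mul, smul_add, smul_mul_assoc,
        smul_smul, mul_comm p r, hrp, one_smul]
    have e2 : x * a * b = x * x + b * x * a := by
      rw [mul_assoc, hx, mul_add, mul_smul_comm, ← mul_assoc x b a, A1, smul_mul_assoc,
        smul_smul, hrp, one_smul]
    rw [sub_mul, e1, e2, mul_sub, ← mul_assoc, ← mul_assoc, pow_two]
    module
  refine ⟨A1, A2, ?_, A4⟩
  have l1 : a * (y * b) = p • (y * x) + (k • (x * x * a) + b * y * a) := by
    rw [← mul_assoc, A4, smul_mul_assoc, mul_assoc, hx, mul_add, smul_add, mul_smul_comm,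
      smul_smul, mul_comm p r, hrp, one_smul, ← mul_assoc, A2, add_mul, smul_mul_assoc, pow_two]
  have l2 : a * (b * y) = x * y + b * y * a := by
    rw [← mul_assoc, hx, add_mul, smul_mul_assoc, mul_assoc b, A4, mul_smul_comm, smul_smul, hrp,
      one_smul, mul_assoc]
  have l3 : a * (x * x) = t • (y * x) + t • (x * y) + x * x * a := by
    rw [← mul_assoc, hy, add_mul, smul_mul_assoc, mul_assoc x a x, hy, mul_add, mul_smul_comm,
      mul_assoc]
    abel
  rw [A2, mul_add, l2, pow_two, mul_smul_comm, l3, smul_add, smul_add, smul_smul, smul_smul,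
    hk] at l1
  refine sub_eq_zero.mp (Eq.trans ?_ (sub_eq_zero.mpr l1.symm))
  module

/-- commutation relations among the root vectors of `U_q⁺(C₂)`. -/
theorem statement11 :
    b2 * b1 = (q ^ (-2 : ℤ)) • (b1 * b2) ∧
    b3 * b1 = (-(q⁻¹ * qbra 1 * (qn1 2)⁻¹)) • (b2 ^ 2) + b1 * b3 ∧
    b4 * b1 = b2 + (q ^ 2) • (b1 * b4) ∧
    b3 * b2 = (q ^ (-2 : ℤ)) • (b2 * b3) ∧
    b4 * b2 = qn1 2 • b3 + b2 * b4 ∧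
    b4 * b3 = (q ^ (-2 : ℤ)) • (b3 * b4) := by
  have h0 := q_ne
  have hq2 := qsq_add_ne
  have ht : qn1 2 ≠ 0 := by
    rw [qn1_two]
    exact div_ne_zero hq2 h0
  have hz : q ^ (-2 : ℤ) = (q ^ 2)⁻¹ := by
    rw [zpow_neg]
    rfl
  have hx : e1 * e2 = b2 + (q ^ 2) • (e2 * e1) := by
    rw [b2]
    abel
  have hy : e1 * b2 = qn1 2 • b3 + b2 * e1 := by
    rw [b3, smul_smul, mul_inv_cancel₀ ht, one_smul]
    abel
  have s1 := serre1
  have s2 := serre2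
  rw [qn1_three] at s1
  rw [qn2_two] at s2
  have hk : (-(q⁻¹ * qbra 1 * (qn1 2)⁻¹)) * qn1 2 = (q ^ 2)⁻¹ - 1 := by
    rw [neg_mul, inv_mul_cancel_right₀ ht, qbra_one]
    field_simp
    ring
  obtain ⟨r1, r2, r3, r4⟩ := comm_rels (q ^ 2) (q ^ 2)⁻¹ (qn1 2) _ e1 e2 b2 b3
    (mul_inv_cancel₀ (pow_ne_zero 2 h0)) ht hk hx hy s1 s2
  rw [hz]
  exact ⟨r1, r2, hx, r3, hy, r4⟩
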